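/- Let u: [0,∞) → (0,∞) be continuous, strictly increasing to ∞ (hence invertible) with u(x)/u(⌊x⌋) → 1 as x → ∞, and let p, q, s be real sequences. If for every λ ∈ (1,∞) the moving average c_n(λ) := (1/u(n))·∑_{w_λ(n) < k ≤ n} (p∘qs)_k converges to (1 − λ⁻¹)·s as n → ∞, then this convergence is uniform in λ on every compact subset of (1,∞). -/

import Mathlib

open Filter Finset Topology

/-- The Voronoi convolution `(a∘b)` of two sequences. -/
noncomputable def vconv (a b : ℕ → ℝ) : ℕ → ℝ
  | 0 => a 0 * b 0
  | n + 1 => (∑ k ∈ Finset.range (n + 2), a (n + 1 - k) * b k)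
      - ∑ k ∈ Finset.range (n + 1), a (n - k) * b k

/-- `w_λ(x) = u⁻¹(u(x)/λ)`, the inverse taken on `[0,∞)`. -/
noncomputable def wl (u : ℝ → ℝ) (lam x : ℝ) : ℝ :=
  Function.invFunOn u (Set.Ici 0) (u x / lam)

/-- The Voronoi moving average `c_x = (1/u(x)) ∑_{w_λ(x) < k ≤ x} a_k`. -/
noncomputable def movAvg (u : ℝ → ℝ) (a : ℕ → ℝ) (lam x : ℝ) : ℝ :=
  (1 / u x) * ∑ k ∈ Finset.range (⌊x⌋₊ + 1),
    if wl u lam x < (k : ℝ) then a k else 0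

/-!
Let `E_n(λ)` be the error `c_n(λ) - (1 - λ⁻¹) s`. At a ratio `r = u(n) / u(m)` the block
`w_{rν}(n) < k ≤ n` consists of the blocks `w_r(n) < k ≤ n` and `w_ν(m) < k ≤ m`, whence
`E_n(r) = E_n(rν) - r⁻¹ E_m(ν)` for every `ν ≥ 1`. Pointwise convergence gives convergence in
measure on bounded sets, so that for `m` and `n` large some `ν ∈ (1,2]` makes both errors on the
right small. Replacing `λ` by the next ratio `r` leaves `c_n` unchanged and, as
`u(n + 1) / u(n) → 1`, hardly changes `(1 - λ⁻¹) s`.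
-/

section Preliminaries

open MeasureTheory

theorem exists_last_le_of_le {α : Type*} [LinearOrder α] {y : ℕ → α} {t : α} {M n : ℕ}
    (hMn : M ≤ n) (hM : y M ≤ t) :
    ∃ m, M ≤ m ∧ m ≤ n ∧ y m ≤ t ∧ ∀ k ∈ Ioc m n, t < y k := by
  refine ⟨Nat.findGreatest (y · ≤ t) n, Nat.le_findGreatest hMn hM, Nat.findGreatest_le n,
    Nat.findGreatest_spec (P := (y · ≤ t)) hMn hM, fun k hk => ?_⟩
  exact not_le.1 (Nat.findGreatest_is_greatest (mem_Ioc.1 hk).1 (mem_Ioc.1 hk).2)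

theorem exists_mem_notMem_and_mul_notMem {A F G : Set ℝ} {r : ℝ} (hr : 1 ≤ r)
    (h : volume F + volume G < volume A) : ∃ ν ∈ A, ν ∉ F ∧ r * ν ∉ G := by
  by_contra! hbad
  have hcover : A ⊆ F ∪ (r * ·) ⁻¹' G := fun ν hν => or_iff_not_imp_left.2 (hbad ν hν)
  have hpreimage : volume ((r * ·) ⁻¹' G) ≤ volume G := by
    rw [Real.volume_preimage_mul_left (by positivity)]
    refine mul_le_of_le_one_left' (ENNReal.ofReal_le_one.2 ?_)
    rw [abs_of_nonneg (by positivity)]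
    exact inv_le_one_of_one_le₀ hr
  refine h.not_ge ?_
  calc volume A ≤ volume F + volume ((r * ·) ⁻¹' G) :=
        (measure_mono hcover).trans (measure_union_le _ _)
    _ ≤ volume F + volume G := by gcongr

theorem tendsto_succ_div_of_tendsto_div_floor {u : ℝ → ℝ} (hcont : ContinuousOn u (Set.Ici 0))
    (hfloor : Tendsto (fun x : ℝ => u x / u (⌊x⌋₊ : ℝ)) atTop (𝓝 1)) :
    Tendsto (fun n : ℕ => u ((n + 1 : ℕ) : ℝ) / u n) atTop (𝓝 1) := by
  rw [Metric.nhds_basis_closedBall.tendsto_right_iff] at hfloor ⊢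
  intro ε hε
  obtain ⟨X, hX⟩ := eventually_atTop.1 (hfloor ε hε)
  filter_upwards [tendsto_natCast_atTop_atTop.eventually_ge_atTop X] with n hn
  have hlt : (n : ℝ) < (n + 1 : ℕ) := by exact_mod_cast n.lt_succ_self
  have hleft : Tendsto (fun x => u x / u n) (𝓝[<] ((n + 1 : ℕ) : ℝ))
      (𝓝 (u ((n + 1 : ℕ) : ℝ) / u n)) :=
    ((hcont.continuousAt (Ici_mem_nhds (by positivity))).tendsto.mono_left
      nhdsWithin_le_nhds).div_const _
  refine Metric.isClosed_closedBall.mem_of_tendsto hleft ?_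
  filter_upwards [Ioo_mem_nhdsLT hlt] with x hx
  have hx_floor : ⌊x⌋₊ = n :=
    (Nat.floor_eq_iff (n.cast_nonneg.trans hx.1.le)).2 ⟨hx.1.le, by exact_mod_cast hx.2⟩
  simpa only [hx_floor] using hX x (hn.trans hx.1.le)

end Preliminaries

section LevelAverage

open MeasureTheory

variable {E : Type*} [NormedAddCommGroup E] [NormedSpace ℝ E]
  {y : ℕ → ℝ} {a : ℕ → E} {s : E} {m n : ℕ}

/-- The moving average `c_n(λ)` written in terms of the sequence `y k = u(k)` alone: the
condition `w_λ(n) < k` becomes `y n / λ < y k`. -/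
noncomputable def levelAverage (y : ℕ → ℝ) (a : ℕ → E) (n : ℕ) (lam : ℝ) : E :=
  (y n)⁻¹ • ∑ k ∈ range (n + 1) with y n / lam < y k, a k

/-- The error `E_n(λ)` of `levelAverage` against its expected limit `(1 - λ⁻¹) s`. -/
noncomputable def levelError (y : ℕ → ℝ) (a : ℕ → E) (s : E) (n : ℕ) (lam : ℝ) : E :=
  levelAverage y a n lam - (1 - lam⁻¹) • s

theorem stronglyMeasurable_levelAverage (y : ℕ → ℝ) (a : ℕ → E) (n : ℕ) :
    StronglyMeasurable (levelAverage y a n) := by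
  unfold levelAverage
  simp only [sum_filter]
  refine (stronglyMeasurable_fun_sum _ fun k _ => ?_).const_smul _
  exact .ite (measurableSet_lt (by fun_prop) measurable_const)
    stronglyMeasurable_const stronglyMeasurable_const

theorem levelAverage_eq_levelAverage_ratio {lam : ℝ} (hy : Monotone y) (hn : 0 < y n)
    (hle : y m ≤ y n / lam) (hlt : ∀ k ∈ Ioc m n, y n / lam < y k) :
    levelAverage y a n lam = levelAverage y a n (y n / y m) := by
  have hlevel : ∀ k ∈ range (n + 1), y n / lam < y k ↔ y n / (y n / y m) < y k := by
    intro k hk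
    rw [div_div_cancel₀ hn.ne']
    refine ⟨hle.trans_lt, fun hmk => hlt k (mem_Ioc.2 ⟨hy.reflect_lt hmk, ?_⟩)⟩
    exact Nat.lt_succ_iff.1 (mem_range.1 hk)
  rw [levelAverage, levelAverage, filter_congr hlevel]

theorem levelAverage_ratio_mul {ν : ℝ} (hy : Monotone y) (hm : 0 < y m) (hmn : m ≤ n)
    (hlt : ∀ k ∈ Ioc m n, y m < y k) (hν : 1 ≤ ν) :
    levelAverage y a n (y n / y m * ν) =
      levelAverage y a n (y n / y m) + (y n / y m)⁻¹ • levelAverage y a m ν := by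
  have hn : 0 < y n := hm.trans_le (hy hmn)
  have hνm : y m / ν ≤ y m := div_le_self hm.le hν
  have hblocks : {k ∈ range (n + 1) | y m / ν < y k} =
      {k ∈ range (n + 1) | y m < y k} ∪ {k ∈ range (m + 1) | y m / ν < y k} := by
    ext k
    simp only [mem_union, mem_filter, mem_range, Nat.lt_succ_iff]
    constructor
    · rintro ⟨hkn, hk⟩
      rcases le_or_gt k m with hkm | hmk
      · exact .inr ⟨hkm, hk⟩
      · exact .inl ⟨hkn, hlt k (mem_Ioc.2 ⟨hmk, hkn⟩)⟩
    · rintro (⟨hkn, hk⟩ | ⟨hkm, hk⟩)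
      · exact ⟨hkn, hνm.trans_lt hk⟩
      · exact ⟨hkm.trans hmn, hk⟩
  have hdisjoint : Disjoint {k ∈ range (n + 1) | y m < y k}
      {k ∈ range (m + 1) | y m / ν < y k} := by
    refine disjoint_left.2 fun k hk hk' => (mem_filter.1 hk).2.not_ge (hy ?_)
    exact Nat.lt_succ_iff.1 (mem_range.1 (mem_filter.1 hk').1)
  have hweight : (y n / y m)⁻¹ * (y m)⁻¹ = (y n)⁻¹ := by field_simp
  simp only [levelAverage]
  rw [← div_div, div_div_cancel₀ hn.ne', hblocks, sum_union hdisjoint, smul_add, smul_smul,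
    hweight]

theorem levelError_ratio {ν : ℝ} (hy : Monotone y) (hm : 0 < y m) (hmn : m ≤ n)
    (hlt : ∀ k ∈ Ioc m n, y m < y k) (hν : 1 ≤ ν) :
    levelError y a s n (y n / y m) =
      levelError y a s n (y n / y m * ν) - (y n / y m)⁻¹ • levelError y a s m ν := by
  simp only [levelError, levelAverage_ratio_mul hy hm hmn hlt hν, mul_inv]
  module

theorem tendstoInMeasure_levelError
    (hlim : ∀ᵐ lam ∂volume.restrict (Set.Ioi 1),
      Tendsto (levelAverage y a · lam) atTop (𝓝 ((1 - lam⁻¹) • s))) (C : ℝ) :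
    TendstoInMeasure (volume.restrict (Set.Ioc 1 C)) (levelError y a s) atTop 0 := by
  refine tendstoInMeasure_of_tendsto_ae (fun n => ?_) ?_
  · have hlimit : StronglyMeasurable fun lam : ℝ => (1 - lam⁻¹) • s :=
      (by fun_prop : Measurable fun lam : ℝ => 1 - lam⁻¹).stronglyMeasurable.smul_const s
    exact ((stronglyMeasurable_levelAverage y a n).sub hlimit).aestronglyMeasurable
  · filter_upwards [ae_restrict_of_ae_restrict_of_subset Set.Ioc_subset_Ioi_self hlim]
      with lam hlam
    exact tendsto_sub_nhds_zero_iff.2 hlam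

theorem eventually_volume_levelError_ge_lt
    (hlim : ∀ᵐ lam ∂volume.restrict (Set.Ioi 1),
      Tendsto (levelAverage y a · lam) atTop (𝓝 ((1 - lam⁻¹) • s)))
    (C : ℝ) {ε : ℝ} (hε : 0 < ε) {η : ENNReal} (hη : 0 < η) :
    ∀ᶠ n in atTop, volume ({lam | ε ≤ ‖levelError y a s n lam‖} ∩ Set.Ioc 1 C) < η := by
  have htendsto := tendstoInMeasure_iff_norm.1 (tendstoInMeasure_levelError hlim C) ε hε
  simpa only [Measure.restrict_apply' measurableSet_Ioc, Pi.zero_apply, sub_zero]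
    using htendsto.eventually_lt_const hη

theorem eventually_norm_levelError_ratio_lt (hy : Monotone y) (htop : Tendsto y atTop atTop)
    (hlim : ∀ᵐ lam ∂volume.restrict (Set.Ioi 1),
      Tendsto (levelAverage y a · lam) atTop (𝓝 ((1 - lam⁻¹) • s)))
    (R : ℝ) {ε : ℝ} (hε : 0 < ε) :
    ∀ᶠ m in atTop, ∀ n ≥ m, y n / y m ≤ R → (∀ k ∈ Ioc m n, y m < y k) →
      ‖levelError y a s n (y n / y m)‖ < ε := by
  have hrare := eventually_forall_ge_atTop.2 <|
    eventually_volume_levelError_ge_lt hlim (2 * R) (half_pos hε) (η := 2⁻¹) (by simp)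
  filter_upwards [hrare, htop.eventually_gt_atTop 0] with m hrare hm n hmn hR hlt
  have hr : 1 ≤ y n / y m := (one_le_div hm).2 (hy hmn)
  have hvolume : volume ({lam | ε / 2 ≤ ‖levelError y a s m lam‖} ∩ Set.Ioc 1 (2 * R)) +
      volume ({lam | ε / 2 ≤ ‖levelError y a s n lam‖} ∩ Set.Ioc 1 (2 * R)) <
        volume (Set.Ioc (1 : ℝ) 2) := by
    refine (ENNReal.add_lt_add (hrare m le_rfl) (hrare n hmn)).trans_eq ?_
    norm_num [ENNReal.inv_two_add_inv_two]
  obtain ⟨ν, ⟨hν1, hν2⟩, hνm, hνn⟩ := exists_mem_notMem_and_mul_notMem hr hvolume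
  have hrν : y n / y m * ν ∈ Set.Ioc 1 (2 * R) := by
    refine ⟨one_lt_mul_of_le_of_lt hr hν1, ?_⟩
    rw [mul_comm 2]
    gcongr
    exact zero_le_one.trans (hr.trans hR)
  have hEm : ‖levelError y a s m ν‖ < ε / 2 :=
    not_le.1 fun h => hνm ⟨h, hν1, by linarith⟩
  have hEn : ‖levelError y a s n (y n / y m * ν)‖ < ε / 2 :=
    not_le.1 fun h => hνn ⟨h, hrν⟩
  rw [levelError_ratio hy hm hmn hlt hν1.le]
  calc _ ≤ ‖levelError y a s n (y n / y m * ν)‖ + ‖(y n / y m)⁻¹ • levelError y a s m ν‖ :=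
        norm_sub_le _ _
    _ ≤ ‖levelError y a s n (y n / y m * ν)‖ + ‖levelError y a s m ν‖ := by
        rw [norm_smul, norm_inv, Real.norm_of_nonneg (by positivity)]
        gcongr
        exact mul_le_of_le_one_left (norm_nonneg _) (inv_le_one_of_one_le₀ hr)
    _ < ε := by linarith

theorem norm_levelError_le_add {lam δ : ℝ} (hy : Monotone y) (hm : 0 < y m) (hmn : m ≤ n)
    (hle : y m ≤ y n / lam) (hle' : y n / lam ≤ (1 + δ) * y m)
    (hlt : ∀ k ∈ Ioc m n, y n / lam < y k) :
    ‖levelError y a s n lam‖ ≤ ‖levelError y a s n (y n / y m)‖ + ‖s‖ * δ := by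
  have hn : 0 < y n := hm.trans_le (hy hmn)
  have hsplit : levelError y a s n lam =
      levelError y a s n (y n / y m) + ((y n / lam - y m) / y n) • s := by
    have hcoeff : (y n / lam - y m) / y n = lam⁻¹ - (y n / y m)⁻¹ := by field_simp
    rw [levelError, levelError, levelAverage_eq_levelAverage_ratio hy hn hle hlt, hcoeff]
    module
  have hgap : (y n / lam - y m) / y n ≤ δ := by
    calc (y n / lam - y m) / y n ≤ (y n / lam - y m) / y m := by
          exact div_le_div_of_nonneg_left (sub_nonneg.2 hle) hm (hy hmn)
      _ ≤ δ := by rw [div_le_iff₀ hm]; linarith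
  calc ‖levelError y a s n lam‖
      ≤ ‖levelError y a s n (y n / y m)‖ + ‖((y n / lam - y m) / y n) • s‖ := by
        rw [hsplit]; exact norm_add_le _ _
    _ ≤ ‖levelError y a s n (y n / y m)‖ + ‖s‖ * δ := by
        rw [norm_smul, mul_comm, Real.norm_of_nonneg (div_nonneg (sub_nonneg.2 hle) hn.le)]
        gcongr

theorem eventually_exists_levelIndex (hy : Monotone y) (htop : Tendsto y atTop atTop)
    (hstep : Tendsto (fun n => y (n + 1) / y n) atTop (𝓝 1)) (B : ℝ) {δ : ℝ} (hδ : 0 < δ)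
    (M : ℕ) :
    ∀ᶠ n in atTop, ∀ lam ∈ Set.Icc 1 B, ∃ m, M ≤ m ∧ m ≤ n ∧ y m ≤ y n / lam ∧
      y n / lam ≤ (1 + δ) * y m ∧ ∀ k ∈ Ioc m n, y n / lam < y k := by
  obtain ⟨N, hMN, hpos, hratio⟩ : ∃ N, M ≤ N ∧ 0 < y N ∧ ∀ m ≥ N, y (m + 1) / y m ≤ 1 + δ :=
    ((eventually_ge_atTop M).and <| (htop.eventually_gt_atTop 0).and <|
      eventually_forall_ge_atTop.2 <| hstep.eventually_le_const (by linarith)).exists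
  filter_upwards [eventually_ge_atTop N, htop.eventually_ge_atTop (B * y N)]
    with n hNn hBn lam ⟨hlam1, hlamB⟩
  have hyN : y N ≤ y n / lam := by
    rw [le_div_iff₀' (zero_lt_one.trans_le hlam1)]
    exact (mul_le_mul_of_nonneg_right hlamB hpos.le).trans hBn
  obtain ⟨m, hNm, hmn, hle, hlt⟩ := exists_last_le_of_le hNn hyN
  have hm : 0 < y m := hpos.trans_le (hy hNm)
  refine ⟨m, hMN.trans hNm, hmn, hle, ?_, hlt⟩
  rcases hmn.eq_or_lt with rfl | hmn
  · calc y m / lam ≤ y m := div_le_self hm.le hlam1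
      _ ≤ (1 + δ) * y m := le_mul_of_one_le_left hm.le (by linarith)
  · calc y n / lam ≤ y (m + 1) := (hlt (m + 1) (mem_Ioc.2 ⟨m.lt_succ_self, hmn⟩)).le
      _ ≤ (1 + δ) * y m := (div_le_iff₀ hm).1 (hratio m hNm)

theorem tendstoUniformlyOn_levelAverage (hy : Monotone y) (htop : Tendsto y atTop atTop)
    (hstep : Tendsto (fun n => y (n + 1) / y n) atTop (𝓝 1))
    (hlim : ∀ᵐ lam ∂volume.restrict (Set.Ioi 1),
      Tendsto (levelAverage y a · lam) atTop (𝓝 ((1 - lam⁻¹) • s))) (B : ℝ) :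
    TendstoUniformlyOn (levelAverage y a) (fun lam => (1 - lam⁻¹) • s) atTop
      (Set.Icc 1 B) := by
  rw [Metric.tendstoUniformlyOn_iff]
  intro ε hε
  obtain ⟨δ, hδ, hδs⟩ : ∃ δ > 0, ‖s‖ * δ < ε / 2 := exists_pos_mul_lt (half_pos hε) _
  obtain ⟨M, hM⟩ := eventually_atTop.1 <| (htop.eventually_gt_atTop 0).and <|
    eventually_norm_levelError_ratio_lt hy htop hlim ((1 + δ) * B) (half_pos hε)
  filter_upwards [eventually_exists_levelIndex hy htop hstep B hδ M] with n hindex lam hlam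
  obtain ⟨m, hMm, hmn, hle, hle', hlt⟩ := hindex lam hlam
  obtain ⟨hm, hratio⟩ := hM m hMm
  have hbound : y n / y m ≤ (1 + δ) * B := by
    rw [div_le_iff₀ hm]
    calc y n ≤ (1 + δ) * y m * lam := (div_le_iff₀ (zero_lt_one.trans_le hlam.1)).1 hle'
      _ ≤ (1 + δ) * y m * B := by gcongr; exact hlam.2
      _ = (1 + δ) * B * y m := by ring
  have hE := hratio n hmn hbound fun k hk => hle.trans_lt (hlt k hk)
  rw [dist_comm, dist_eq_norm]
  calc ‖levelError y a s n lam‖ ≤ ‖levelError y a s n (y n / y m)‖ + ‖s‖ * δ :=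
        norm_levelError_le_add hy hm hmn hle hle' hlt
    _ < ε := by linarith

end LevelAverage

section MovingAverage

open MeasureTheory

variable {u : ℝ → ℝ} {lam : ℝ}

theorem wl_lt_iff {x z : ℝ} (hcont : ContinuousOn u (Set.Ici 0))
    (hmono : StrictMonoOn u (Set.Ici 0)) (htop : Tendsto u atTop atTop)
    (hx : u 0 ≤ u x / lam) (hz : 0 ≤ z) : wl u lam x < z ↔ u x / lam < u z := by
  have hpreimage : u x / lam ∈ u '' Set.Ici 0 :=
    isPreconnected_Ici.intermediate_value_Ici Set.self_mem_Ici
      (le_principal_iff.2 (Ici_mem_atTop 0)) hcont htop hx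
  have hmem : wl u lam x ∈ Set.Ici (0 : ℝ) := Function.invFunOn_mem hpreimage
  have hvalue : u (wl u lam x) = u x / lam := Function.invFunOn_eq hpreimage
  rw [← hvalue, hmono.lt_iff_lt hmem hz]

theorem movAvg_natCast_eq_levelAverage (a : ℕ → ℝ) {n : ℕ} (hcont : ContinuousOn u (Set.Ici 0))
    (hmono : StrictMonoOn u (Set.Ici 0)) (htop : Tendsto u atTop atTop)
    (hn : u 0 ≤ u n / lam) : movAvg u a lam n = levelAverage (fun k => u k) a n lam := by
  simp only [movAvg, levelAverage, Nat.floor_natCast, sum_filter, one_div, smul_eq_mul,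
    wl_lt_iff hcont hmono htop hn (Nat.cast_nonneg _)]

theorem eventually_eqOn_movAvg_levelAverage (a : ℕ → ℝ) (hpos : 0 < u 0)
    (hcont : ContinuousOn u (Set.Ici 0)) (hmono : StrictMonoOn u (Set.Ici 0))
    (htop : Tendsto u atTop atTop) (B : ℝ) :
    ∀ᶠ n : ℕ in atTop,
      Set.EqOn (fun lam => movAvg u a lam n) (levelAverage (fun k => u k) a n) (Set.Icc 1 B) := by
  filter_upwards [(htop.comp tendsto_natCast_atTop_atTop).eventually_ge_atTop (B * u 0)]
    with n hn lam hlam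
  refine movAvg_natCast_eq_levelAverage a hcont hmono htop ?_
  rw [le_div_iff₀' (zero_lt_one.trans_le hlam.1)]
  exact (mul_le_mul_of_nonneg_right hlam.2 hpos.le).trans hn

theorem movingAverage_uniform_on_compacts_general (u : ℝ → ℝ) (a : ℕ → ℝ) (sVal : ℝ)
    (hpos : ∀ x ≥ (0 : ℝ), 0 < u x) (hcont : ContinuousOn u (Set.Ici 0))
    (hmono : StrictMonoOn u (Set.Ici 0)) (htop : Tendsto u atTop atTop)
    (hfloor : Tendsto (fun x : ℝ => u x / u (⌊x⌋₊ : ℝ)) atTop (𝓝 1))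
    (hae : ∀ᵐ lam ∂volume.restrict (Set.Ioi 1),
      Tendsto (fun n : ℕ => movAvg u a lam n) atTop (𝓝 ((1 - lam⁻¹) * sVal))) (B : ℝ) :
    TendstoUniformlyOn (fun (n : ℕ) (lam : ℝ) => movAvg u a lam n)
      (fun lam => (1 - lam⁻¹) * sVal) atTop (Set.Icc 1 B) := by
  have heq := eventually_eqOn_movAvg_levelAverage a (hpos 0 le_rfl) hcont hmono htop
  have hy : Monotone fun k : ℕ => u k := fun i j hij =>
    hmono.monotoneOn (Set.mem_Ici.2 i.cast_nonneg) (Set.mem_Ici.2 j.cast_nonneg)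
      (Nat.cast_le.2 hij)
  have hlim : ∀ᵐ lam ∂volume.restrict (Set.Ioi 1),
      Tendsto (levelAverage (fun k => u k) a · lam) atTop (𝓝 ((1 - lam⁻¹) • sVal)) := by
    filter_upwards [hae, ae_restrict_mem measurableSet_Ioi] with lam hconv hlam
    exact hconv.congr' ((heq lam).mono fun n hn => hn ⟨le_of_lt hlam, le_rfl⟩)
  exact (tendstoUniformlyOn_levelAverage hy (htop.comp tendsto_natCast_atTop_atTop)
    (tendsto_succ_div_of_tendsto_div_floor hcont hfloor) hlim B).congr
      ((heq B).mono fun n hn => hn.symm)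

end MovingAverage

/-- Theorem 6: if the moving-average convergence holds for every
`λ ∈ (1,∞)`, then it holds uniformly on compact `λ`-subsets of `(1,∞)`. -/
theorem movingAverage_uniform_on_compacts (u : ℝ → ℝ) (p q s : ℕ → ℝ) (sVal : ℝ)
    (hpos : ∀ x ≥ (0 : ℝ), 0 < u x)
    (hcont : ContinuousOn u (Set.Ici 0))
    (hmono : StrictMonoOn u (Set.Ici 0))
    (htop : Tendsto u atTop atTop)
    (hfloor : Tendsto (fun x : ℝ => u x / u (⌊x⌋₊ : ℝ)) atTop (𝓝 1))
    (hall : ∀ lam : ℝ, 1 < lam →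
      Tendsto (fun n : ℕ => movAvg u (vconv p (fun k => q k * s k)) lam n)
        atTop (𝓝 ((1 - lam⁻¹) * sVal))) :
    ∀ K : Set ℝ, K ⊆ Set.Ioi 1 → IsCompact K →
      TendstoUniformlyOn
        (fun (n : ℕ) (lam : ℝ) => movAvg u (vconv p (fun k => q k * s k)) lam n)
        (fun lam => (1 - lam⁻¹) * sVal) atTop K := by
  intro K hK hcompact
  obtain ⟨B, hB⟩ := hcompact.bddAbove
  exact (movingAverage_uniform_on_compacts_general u _ sVal hpos hcont hmono htop hfloor
    (MeasureTheory.ae_restrict_of_forall_mem measurableSet_Ioi hall) B).mono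
      fun lam hlam => ⟨le_of_lt (hK hlam), hB hlam⟩
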